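/- Let d ≥ 1 and 1 < q ≤ α ≤ p ≤ ∞ with 1 < p. Then the space C_c^∞(ℝ^d) of compactly supported smooth functions (and hence also the Schwartz space of rapidly decreasing smooth functions) is a dense subspace of 𝓗(q,p,α); consequently the Banach space 𝓗(q,p,α) is separable. -/

import Mathlib

/-! If `f = Σ c_n St_{ρ_n} g_n` is an 𝔥-decomposition, its tail `Σ_{n ≥ N} c_n St_{ρ_n} g_n` has norm
at most `Σ_{n ≥ N} |c_n|`, so only finitely many terms matter. In each of them `c_n g_n` lies in the
amalgam space `(L^{q'}, ℓ^{p'})`, whose exponents are finite because `q, p > 1`, and is therefore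
approximated in the amalgam norm by a test function (`amalgam_approx` reduces this to `L^{q'}` on
finitely many unit cubes, `smooth_approx_cubes` handles that case). Dilating and summing gives a test
function close to `f` (`MemH.exists_smooth`), since each error costs at most its amalgam norm
whatever the dilation parameter (`HBound.add_St`).

For separability the uncountably many parameters `ρ_n` have to be avoided. A test function `h` itself
has finite amalgam norm, and `‖h - w‖_𝓗 ≤ ‖h - w‖_{q',p'}` (one term, dilation `1`), so it suffices to
approximate `h` in the amalgam norm by a fixed countable family: restrictions to finite unions of
unit cubes of a dense sequence of the separable space `L^{q'}`. -/

open MeasureTheory Filter Topology ENNReal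

noncomputable section

/-- Dilation operator `St^{(α)}_ρ f (x) = ρ^{-d/α} f(x/ρ)` on functions on `ℝ^d`. -/
def St (d : ℕ) (α : ℝ≥0∞) (ρ : ℝ) (f : (Fin d → ℝ) → ℂ) : (Fin d → ℝ) → ℂ :=
  fun x => (ρ ^ (-(d : ℝ) * (1 / α).toReal) : ℝ) • f (ρ⁻¹ • x)

/-- The cube `I^ρ_k = Π_j [k_j ρ, (k_j+1) ρ)`. -/
def cube (d : ℕ) (ρ : ℝ) (k : Fin d → ℤ) : Set (Fin d → ℝ) :=
  Set.univ.pi fun j => Set.Ico ((k j : ℝ) * ρ) (((k j : ℝ) + 1) * ρ)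

/-- The amalgam norm `_ρ‖f‖_{q,p}`. -/
def amalgamNorm (d : ℕ) (q p : ℝ≥0∞) (ρ : ℝ) (f : (Fin d → ℝ) → ℂ) : ℝ≥0∞ :=
  if p = ∞ then ⨆ k : Fin d → ℤ, eLpNorm ((cube d ρ k).indicator f) q volume
  else (∑' k : Fin d → ℤ,
      (eLpNorm ((cube d ρ k).indicator f) q volume) ^ p.toReal) ^ (1 / p.toReal)

/-- The Fofana norm `‖f‖_{q,p,α} = sup_{ρ>0} ρ^{d(1/α-1/q)} · _ρ‖f‖_{q,p}`. -/
def fofanaNorm (d : ℕ) (q p α : ℝ≥0∞) (f : (Fin d → ℝ) → ℂ) : ℝ≥0∞ :=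
  ⨆ (ρ : ℝ) (_ : 0 < ρ),
    ENNReal.ofReal (ρ ^ ((d : ℝ) * ((1 / α).toReal - (1 / q).toReal))) *
      amalgamNorm d q p ρ f

/-- `{(c n, ρ n, g n)}` is an 𝔥-decomposition of `f` (for the space `𝓗(q,p,α)`,
here parametrized by the conjugate exponents `q', p', α'`):
`Σ |c_n| < ∞`, each `g n` is in the unit ball of the amalgam space `(L^{q'}, ℓ^{p'})`,
and `f = Σ_n c_n St^{(α')}_{ρ_n} g_n` in the sense of `L^1_loc`. -/
structure IsHDecomp (d : ℕ) (q' p' α' : ℝ≥0∞) (f : (Fin d → ℝ) → ℂ)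
    (c : ℕ → ℂ) (ρ : ℕ → ℝ) (g : ℕ → (Fin d → ℝ) → ℂ) : Prop where
  summable : Summable fun n => ‖c n‖
  rho_pos : ∀ n, 0 < ρ n
  loc_int : ∀ n, LocallyIntegrable (g n) volume
  norm_le : ∀ n, amalgamNorm d q' p' 1 (g n) ≤ 1
  f_loc_int : LocallyIntegrable f volume
  tendsto : ∀ K : Set (Fin d → ℝ), IsCompact K →
    Tendsto (fun m => ∫ x in K, ‖(∑ n ∈ Finset.range m, c n • St d α' (ρ n) (g n)) x - f x‖)
      atTop (𝓝 0)

/-- Membership in the space `𝓗(q,p,α)` (parametrized by conjugate exponents). -/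
def MemH (d : ℕ) (q' p' α' : ℝ≥0∞) (f : (Fin d → ℝ) → ℂ) : Prop :=
  ∃ c ρ g, IsHDecomp d q' p' α' f c ρ g

/-- The norm of `𝓗(q,p,α)`:  `inf Σ|c_n|` over all 𝔥-decompositions. -/
def HNorm (d : ℕ) (q' p' α' : ℝ≥0∞) (f : (Fin d → ℝ) → ℂ) : ℝ≥0∞ :=
  sInf {s | ∃ c ρ g, IsHDecomp d q' p' α' f c ρ g ∧ s = ∑' n, ENNReal.ofReal ‖c n‖}

end

section HDensity

/-! ### Manipulation of 𝔥-decompositions -/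

/-- `f` admits an 𝔥-decomposition whose coefficients satisfy `Σ |c_n| ≤ s`. -/
def HBound (d : ℕ) (q' p' α' : ℝ≥0∞) (f : (Fin d → ℝ) → ℂ) (s : ℝ) : Prop :=
  ∃ c ρ g, IsHDecomp d q' p' α' f c ρ g ∧ ∑' n, ‖c n‖ ≤ s

variable {d : ℕ} {q' p' α' : ℝ≥0∞}

lemma HBound.memH {f : (Fin d → ℝ) → ℂ} {s : ℝ} (h : HBound d q' p' α' f s) :
    MemH d q' p' α' f := by
  obtain ⟨c, ρ, g, h, -⟩ := h
  exact ⟨c, ρ, g, h⟩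

lemma HBound.hNorm_le {f : (Fin d → ℝ) → ℂ} {s : ℝ} (h : HBound d q' p' α' f s) :
    HNorm d q' p' α' f ≤ ENNReal.ofReal s := by
  obtain ⟨c, ρ, g, h, hs⟩ := h
  have h1 : HNorm d q' p' α' f ≤ ∑' n, ENNReal.ofReal ‖c n‖ := sInf_le ⟨c, ρ, g, h, rfl⟩
  refine h1.trans ?_
  rw [← ENNReal.ofReal_tsum_of_nonneg (fun n => norm_nonneg _) h.summable]
  exact ENNReal.ofReal_le_ofReal hs

lemma amalgamNorm_zero (hp1 : 1 ≤ p') (hpt : p' ≠ ∞) : amalgamNorm d q' p' 1 0 = 0 := by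
  have : 0 < p'.toReal := ENNReal.toReal_pos (by positivity) hpt
  simp [amalgamNorm, hpt, Set.indicator_zero', this]

lemma HBound.zero (hp1 : 1 ≤ p') (hpt : p' ≠ ∞) : HBound d q' p' α' 0 0 := by
  refine ⟨fun _ => 0, fun _ => 1, fun _ => 0, ⟨?_, ?_, ?_, ?_, ?_, ?_⟩, by simp⟩
  · simp
  · simp
  · exact fun _ => locallyIntegrable_zero
  · simp [amalgamNorm_zero hp1 hpt]
  · exact locallyIntegrable_zero
  · simp

lemma amalgamNorm_smul (hp1 : 1 ≤ p') (hpt : p' ≠ ∞) (c : ℂ) (f : (Fin d → ℝ) → ℂ) :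
    amalgamNorm d q' p' 1 (c • f) = ‖c‖ₑ * amalgamNorm d q' p' 1 f := by
  have hp : 0 < p'.toReal := ENNReal.toReal_pos (by positivity) hpt
  simp only [amalgamNorm, hpt, if_false]
  have : ∀ k, eLpNorm ((cube d 1 k).indicator (c • f)) q' volume ^ p'.toReal
      = ‖c‖ₑ ^ p'.toReal * eLpNorm ((cube d 1 k).indicator f) q' volume ^ p'.toReal := by
    intro k
    have h1 : (cube d 1 k).indicator (c • f) = c • (cube d 1 k).indicator f :=
      Set.indicator_const_smul _ c f
    rw [h1, ← ENNReal.mul_rpow_of_nonneg _ _ hp.le]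
    congr 1
    exact eLpNorm_const_smul c _ q' volume
  simp_rw [this]
  rw [ENNReal.tsum_mul_left, ENNReal.mul_rpow_of_nonneg _ _ (by positivity), ← ENNReal.rpow_mul,
    mul_one_div_cancel hp.ne', ENNReal.rpow_one]

lemma locallyIntegrable_St {r : ℝ} (hr : 0 < r) {f : (Fin d → ℝ) → ℂ}
    (hf : LocallyIntegrable f volume) : LocallyIntegrable (St d α' r f) volume := by
  have : LocallyIntegrable (fun x : Fin d → ℝ => f (r⁻¹ • x)) volume := by
    rw [locallyIntegrable_iff]
    intro K hK
    have h1 : IsCompact ((fun x : Fin d → ℝ => r⁻¹ • x) '' K) := hK.image (by fun_prop)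
    have h2 := (hf.integrableOn_isCompact h1).integrable_indicator h1.measurableSet
    have h3 := h2.comp_smul (inv_ne_zero hr.ne')
    rw [← integrable_indicator_iff hK.measurableSet]
    refine h3.congr (ae_of_all _ fun x => ?_)
    have hinj : Function.Injective (fun x : Fin d → ℝ => r⁻¹ • x) :=
      smul_right_injective _ (inv_ne_zero hr.ne')
    by_cases hx : x ∈ K
    · simp only [Set.indicator_of_mem hx]
      rw [Set.indicator_of_mem (Set.mem_image_of_mem _ hx)]
    · simp only [Set.indicator_of_notMem hx]
      rw [Set.indicator_of_notMem]
      rintro ⟨y, hy, hxy⟩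
      exact hx (hinj hxy ▸ hy)
  exact this.smul (r ^ (-(d : ℝ) * (1 / α').toReal) : ℝ)

lemma St_smul (r : ℝ) (c : ℂ) (f : (Fin d → ℝ) → ℂ) :
    St d α' r (c • f) = c • St d α' r f := by
  ext x
  simp only [St, Pi.smul_apply]
  rw [smul_comm]

lemma St_sub (r : ℝ) (f g : (Fin d → ℝ) → ℂ) :
    St d α' r (f - g) = St d α' r f - St d α' r g := by
  ext x
  simp [St, mul_sub]

lemma St_one (f : (Fin d → ℝ) → ℂ) : St d α' 1 f = f := by
  ext x
  simp [St]

/-- The sequence `u` with the term `a` put in front. -/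
def consSeq {β : Type*} (a : β) (u : ℕ → β) : ℕ → β
  | 0 => a
  | n + 1 => u n

@[simp] lemma consSeq_zero {β : Type*} (a : β) (u : ℕ → β) : consSeq a u 0 = a := rfl

@[simp] lemma consSeq_succ {β : Type*} (a : β) (u : ℕ → β) (n : ℕ) :
    consSeq a u (n + 1) = u n := rfl

/-- A dilate of a function of amalgam norm at most `t` can be prepended to an 𝔥-decomposition as a
new term of coefficient `t`. -/
lemma HBound.add_St (hp1 : 1 ≤ p') (hpt : p' ≠ ∞) {f φ : (Fin d → ℝ) → ℂ} {s t r : ℝ}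
    (h : HBound d q' p' α' f s) (hr : 0 < r) (ht : 0 < t) (hφ : LocallyIntegrable φ volume)
    (hn : amalgamNorm d q' p' 1 φ ≤ ENNReal.ofReal t) :
    HBound d q' p' α' (f + St d α' r φ) (s + t) := by
  obtain ⟨c, ρ, g, h, hs⟩ := h
  have htc : (t : ℂ) ≠ 0 := by exact_mod_cast ht.ne'
  have hsum : Summable fun n => ‖consSeq (t : ℂ) c n‖ := by
    rw [← summable_nat_add_iff 1]
    exact h.summable
  refine ⟨consSeq (t : ℂ) c, consSeq r ρ, consSeq ((t : ℂ)⁻¹ • φ) g, ⟨hsum, ?_, ?_, ?_, ?_, ?_⟩, ?_⟩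
  · rintro (_ | n)
    exacts [hr, h.rho_pos n]
  · rintro (_ | n)
    exacts [hφ.smul ((t : ℂ)⁻¹), h.loc_int n]
  · rintro (_ | n)
    · change amalgamNorm d q' p' 1 ((t : ℂ)⁻¹ • φ) ≤ 1
      rw [amalgamNorm_smul hp1 hpt]
      have : ‖(t : ℂ)⁻¹‖ₑ = (ENNReal.ofReal t)⁻¹ := by
        rw [enorm_inv htc, ← ofReal_norm, Complex.norm_real, Real.norm_of_nonneg ht.le]
      rw [this]
      calc _ ≤ (ENNReal.ofReal t)⁻¹ * ENNReal.ofReal t := by gcongr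
        _ ≤ 1 := ENNReal.inv_mul_le_one _
    · exact h.norm_le n
  · exact h.f_loc_int.add (locallyIntegrable_St hr hφ)
  · intro K hK
    rw [← tendsto_add_atTop_iff_nat 1]
    refine (h.tendsto K hK).congr fun m => ?_
    congr 1
    ext x
    rw [Finset.sum_range_succ']
    simp only [consSeq_zero, consSeq_succ]
    rw [← St_smul, smul_inv_smul₀ htc]
    simp only [Pi.add_apply]
    congr 1
    ring
  · rw [hsum.tsum_eq_zero_add]
    simp only [consSeq_zero, consSeq_succ]
    rw [Complex.norm_real, Real.norm_of_nonneg ht.le]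
    linarith

lemma HBound.add_sum_St (hp1 : 1 ≤ p') (hpt : p' ≠ ∞) {f : (Fin d → ℝ) → ℂ} {s : ℝ}
    {φ : ℕ → (Fin d → ℝ) → ℂ} {t r : ℕ → ℝ}
    (h : HBound d q' p' α' f s) (hr : ∀ n, 0 < r n) (ht : ∀ n, 0 < t n)
    (hφ : ∀ n, LocallyIntegrable (φ n) volume)
    (hn : ∀ n, amalgamNorm d q' p' 1 (φ n) ≤ ENNReal.ofReal (t n)) (N : ℕ) :
    HBound d q' p' α' (f + ∑ n ∈ Finset.range N, St d α' (r n) (φ n))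
      (s + ∑ n ∈ Finset.range N, t n) := by
  induction N with
  | zero => simpa using h
  | succ N ih =>
    rw [Finset.sum_range_succ, Finset.sum_range_succ, ← add_assoc, ← add_assoc]
    exact ih.add_St hp1 hpt (hr N) (ht N) (hφ N) (hn N)

/-- Subtracting the first `N` terms of an 𝔥-decomposition leaves a function decomposed by the
remaining terms. -/
lemma IsHDecomp.tail {f : (Fin d → ℝ) → ℂ} {c : ℕ → ℂ} {ρ : ℕ → ℝ} {g : ℕ → (Fin d → ℝ) → ℂ}
    (h : IsHDecomp d q' p' α' f c ρ g) (N : ℕ) :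
    HBound d q' p' α' (f - ∑ n ∈ Finset.range N, c n • St d α' (ρ n) (g n))
      (∑' n, ‖c (n + N)‖) := by
  refine ⟨fun n => c (n + N), fun n => ρ (n + N), fun n => g (n + N),
    ⟨(summable_nat_add_iff N).2 h.summable, fun n => h.rho_pos _, fun n => h.loc_int _,
      fun n => h.norm_le _, ?_, ?_⟩, le_rfl⟩
  · refine h.f_loc_int.sub ?_
    have : ∀ s : Finset ℕ, LocallyIntegrable (∑ n ∈ s, c n • St d α' (ρ n) (g n)) volume := by
      intro s
      induction s using Finset.induction_on with
      | empty => exact locallyIntegrable_zero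
      | insert a s ha ih =>
        rw [Finset.sum_insert ha]
        exact ((locallyIntegrable_St (h.rho_pos a) (h.loc_int a)).smul _).add ih
    exact this _
  · intro K hK
    refine (((tendsto_add_atTop_iff_nat N).2 (h.tendsto K hK))).congr fun m => ?_
    congr 1
    ext x
    rw [add_comm m N, Finset.sum_range_add]
    simp only [Pi.add_apply, Pi.sub_apply, Finset.sum_apply, Pi.smul_apply, add_comm N]
    congr 1
    ring

/-! ### Approximation in the amalgam norm -/

lemma measurableSet_cube (r : ℝ) (k : Fin d → ℤ) : MeasurableSet (cube d r k) :=
  MeasurableSet.univ_pi fun _ => measurableSet_Ico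

lemma mem_cube_one {k : Fin d → ℤ} {x : Fin d → ℝ} :
    x ∈ cube d 1 k ↔ k = fun j => ⌊x j⌋ := by
  simp only [cube, Set.mem_univ_pi, Set.mem_Ico, mul_one, funext_iff]
  exact forall_congr' fun j => by rw [eq_comm, Int.floor_eq_iff]

/-- A compactly supported function vanishes off finitely many unit cubes. -/
lemma exists_finset_cubes {f : (Fin d → ℝ) → ℂ} (hf : HasCompactSupport f) :
    ∃ S : Finset (Fin d → ℤ), ∀ k ∉ S, ∀ x ∈ cube d 1 k, f x = 0 := by
  obtain ⟨R, hR⟩ := hf.isCompact.isBounded.subset_closedBall 0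
  refine ⟨Fintype.piFinset fun _ => Finset.Icc ⌊-R⌋ ⌊R⌋, fun k hk x hx => ?_⟩
  by_contra hne
  apply hk
  have hx' := hR (subset_tsupport f hne)
  rw [mem_closedBall_zero_iff] at hx'
  rw [mem_cube_one] at hx
  rw [Fintype.mem_piFinset]
  intro j
  have := abs_le.1 ((norm_le_pi_norm x j).trans hx')
  rw [hx, Finset.mem_Icc]
  exact ⟨Int.floor_mono this.1, Int.floor_mono this.2⟩

lemma indicator_cube_eq_zero {f : (Fin d → ℝ) → ℂ} {k : Fin d → ℤ}
    (h : ∀ x ∈ cube d 1 k, f x = 0) : (cube d 1 k).indicator f = 0 := by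
  ext x
  by_cases hx : x ∈ cube d 1 k <;> simp [hx, h]

lemma amalgamNorm_lt_top (hp1 : 1 ≤ p') (hpt : p' ≠ ∞) {f : (Fin d → ℝ) → ℂ}
    (S : Finset (Fin d → ℤ)) (hS : ∀ k ∉ S, ∀ x ∈ cube d 1 k, f x = 0) (hf : MemLp f q' volume) :
    amalgamNorm d q' p' 1 f < ∞ := by
  have hp : 0 < p'.toReal := ENNReal.toReal_pos (by positivity) hpt
  simp only [amalgamNorm, hpt, if_false]
  apply ENNReal.rpow_lt_top_of_nonneg (by positivity)
  rw [tsum_eq_sum (s := S)]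
  · refine (ENNReal.sum_lt_top.2 fun k _ => ?_).ne
    exact ENNReal.rpow_lt_top_of_nonneg hp.le (hf.indicator (measurableSet_cube 1 k)).2.ne
  · intro k hk
    rw [indicator_cube_eq_zero (hS k hk)]
    simp [hp]

lemma memLp_indicator_cube (hp1 : 1 ≤ p') (hpt : p' ≠ ∞) {f : (Fin d → ℝ) → ℂ}
    (hf : AEStronglyMeasurable f volume) (hn : amalgamNorm d q' p' 1 f ≠ ∞) (k : Fin d → ℤ) :
    MemLp ((cube d 1 k).indicator f) q' volume := by
  have hp : 0 < p'.toReal := ENNReal.toReal_pos (by positivity) hpt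
  refine ⟨hf.indicator (measurableSet_cube 1 k), ?_⟩
  simp only [amalgamNorm, hpt, if_false] at hn
  have h1 : ∑' k : Fin d → ℤ, (eLpNorm ((cube d 1 k).indicator f) q' volume) ^ p'.toReal ≠ ∞ :=
    fun h => hn (by rw [h, ENNReal.top_rpow_of_pos (by positivity)])
  have h2 := ENNReal.ne_top_of_tsum_ne_top h1 k
  rw [lt_top_iff_ne_top]
  exact fun h => h2 (by rw [h, ENNReal.top_rpow_of_pos hp])

/-- A function of finite amalgam norm is approximated in that norm by members of any class `C` of
functions which, over every finite union of unit cubes, is dense in `L^{q'}`: outside a large finite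
family of cubes the `ℓ^{p'}` tail of the norm is small, and over that family it is enough to
approximate in `L^{q'}`. -/
lemma amalgam_approx (hp1 : 1 ≤ p') (hpt : p' ≠ ∞) (C : Set ((Fin d → ℝ) → ℂ))
    (hC : ∀ S : Finset (Fin d → ℤ), ∀ G : (Fin d → ℝ) → ℂ, MemLp G q' volume →
      (∀ k ∉ S, ∀ x ∈ cube d 1 k, G x = 0) → ∀ τ : ℝ, 0 < τ →
      ∃ w ∈ C, (∀ k ∉ S, ∀ x ∈ cube d 1 k, w x = 0) ∧
        eLpNorm (G - w) q' volume ≤ ENNReal.ofReal τ)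
    {f : (Fin d → ℝ) → ℂ} (hf : AEStronglyMeasurable f volume)
    (hn : amalgamNorm d q' p' 1 f ≠ ∞) {t : ℝ} (ht : 0 < t) :
    ∃ w ∈ C, amalgamNorm d q' p' 1 (f - w) ≤ ENNReal.ofReal t := by
  have hp : 0 < p'.toReal := ENNReal.toReal_pos (by positivity) hpt
  have hmem := memLp_indicator_cube hp1 hpt hf hn
  simp only [amalgamNorm, hpt, if_false] at hn ⊢
  set a : (Fin d → ℤ) → ℝ≥0∞ :=
    fun k => (eLpNorm ((cube d 1 k).indicator f) q' volume) ^ p'.toReal with ha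
  have h1 : ∑' k, a k ≠ ∞ := fun h => hn (by rw [h, ENNReal.top_rpow_of_pos (by positivity)])
  have hT : 0 < t ^ p'.toReal / 2 := by positivity
  obtain ⟨S, hS⟩ := ((ENNReal.tendsto_tsum_compl_atTop_zero h1).eventually
    (gt_mem_nhds (ENNReal.ofReal_pos.2 hT))).exists
  -- `b` bounds the `p'`-th power of the error on each cube of `S`, so that these errors add up to at
  -- most `t ^ p' / 2`.
  set b : ℝ := t ^ p'.toReal / 2 / (S.card + 1) with hb
  have hbpos : 0 < b := by positivity
  set B : Set (Fin d → ℝ) := ⋃ k ∈ S, cube d 1 k with hB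
  have hG : MemLp (B.indicator f) q' volume := by
    have : B.indicator f = ∑ k ∈ S, (cube d 1 k).indicator f := by
      ext x
      rw [Finset.sum_apply]
      by_cases hx : (fun j => ⌊x j⌋) ∈ S
      · have hxB : x ∈ B := Set.mem_biUnion hx (mem_cube_one.2 rfl)
        rw [Set.indicator_of_mem hxB,
          Finset.sum_eq_single_of_mem _ hx, Set.indicator_of_mem (mem_cube_one.2 rfl)]
        intro k _ hk
        exact Set.indicator_of_notMem (fun h => hk (mem_cube_one.1 h)) _
      · rw [Set.indicator_of_notMem, Finset.sum_eq_zero]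
        · intro k hk
          refine Set.indicator_of_notMem (fun h => hx ?_) _
          rwa [← mem_cube_one.1 h]
        · simp only [hB, Set.mem_iUnion, not_exists]
          intro k hk h
          exact hx (by rwa [← mem_cube_one.1 h])
    rw [this]
    exact memLp_finsetSum' _ fun k _ => hmem k
  obtain ⟨w, hwC, hw0, hw⟩ := hC S (B.indicator f) hG (by
    intro k hk x hx
    refine Set.indicator_of_notMem ?_ _
    simp only [hB, Set.mem_iUnion, not_exists]
    intro l hl h
    exact hk (by rwa [mem_cube_one.1 hx, ← mem_cube_one.1 h])) (b ^ (1 / p'.toReal)) (by positivity)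
  refine ⟨w, hwC, ?_⟩
  have hin : ∀ k ∈ S, (eLpNorm ((cube d 1 k).indicator (f - w)) q' volume) ^ p'.toReal
      ≤ ENNReal.ofReal b := by
    intro k hk
    have : (cube d 1 k).indicator (f - w) = (cube d 1 k).indicator (B.indicator f - w) := by
      ext x
      by_cases hx : x ∈ cube d 1 k
      · have : x ∈ B := Set.mem_biUnion hk hx
        simp [hx, this]
      · simp [hx]
    rw [this]
    calc _ ≤ ENNReal.ofReal (b ^ (1 / p'.toReal)) ^ p'.toReal := by
          gcongr
          exact (eLpNorm_indicator_le _).trans hw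
      _ = ENNReal.ofReal b := by
          rw [ENNReal.ofReal_rpow_of_nonneg (by positivity) hp.le, ← Real.rpow_mul hbpos.le,
            one_div_mul_cancel hp.ne', Real.rpow_one]
  have hout : ∀ k ∉ S, (eLpNorm ((cube d 1 k).indicator (f - w)) q' volume) ^ p'.toReal = a k := by
    intro k hk
    have : (cube d 1 k).indicator (f - w) = (cube d 1 k).indicator f := by
      ext x
      by_cases hx : x ∈ cube d 1 k
      · simp [hx, hw0 k hk x hx]
      · simp [hx]
    rw [this]
  have hsum : ∑' k, (eLpNorm ((cube d 1 k).indicator (f - w)) q' volume) ^ p'.toReal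
      ≤ ENNReal.ofReal (t ^ p'.toReal) := by
    rw [← ENNReal.sum_add_tsum_compl S]
    calc _ ≤ (∑ _k ∈ S, ENNReal.ofReal b) + ENNReal.ofReal (t ^ p'.toReal / 2) := by
          refine add_le_add (Finset.sum_le_sum hin) ?_
          refine le_trans (le_of_eq ?_) hS.le
          exact tsum_congr fun k => hout k.1 k.2
      _ ≤ ENNReal.ofReal (t ^ p'.toReal / 2) + ENNReal.ofReal (t ^ p'.toReal / 2) := by
          gcongr
          rw [Finset.sum_const, ← ENNReal.ofReal_nsmul]
          apply ENNReal.ofReal_le_ofReal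
          rw [nsmul_eq_mul, hb, mul_div_assoc', div_le_iff₀ (by positivity)]
          nlinarith
      _ = _ := by rw [← ENNReal.ofReal_add hT.le hT.le, add_halves]
  calc _ ≤ ENNReal.ofReal (t ^ p'.toReal) ^ (1 / p'.toReal) := by gcongr
    _ = _ := by
      rw [ENNReal.ofReal_rpow_of_nonneg (by positivity) (by positivity), ← Real.rpow_mul ht.le,
        mul_one_div_cancel hp.ne', Real.rpow_one]

/-- Test functions vanishing off a finite union of unit cubes are dense in `L^{q'}` of that union:
a smooth approximant on the whole space is multiplied by a cutoff equal to `1` on a compact subset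
of the interior of the cubes that carries almost all of the measure. -/
lemma smooth_approx_cubes (hq1 : 1 ≤ q') (hqt : q' ≠ ∞) (S : Finset (Fin d → ℤ))
    (G : (Fin d → ℝ) → ℂ) (hG : MemLp G q' volume)
    (hG0 : ∀ k ∉ S, ∀ x ∈ cube d 1 k, G x = 0) (τ : ℝ) (hτ : 0 < τ) :
    ∃ w ∈ {w : (Fin d → ℝ) → ℂ | ContDiff ℝ (⊤ : ℕ∞) w ∧ HasCompactSupport w},
      (∀ k ∉ S, ∀ x ∈ cube d 1 k, w x = 0) ∧
        eLpNorm (G - w) q' volume ≤ ENNReal.ofReal τ := by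
  set B : Set (Fin d → ℝ) := ⋃ k ∈ S, cube d 1 k with hB
  set U : Set (Fin d → ℝ) := ⋃ k ∈ S, interior (cube d 1 k) with hU
  have hUo : IsOpen U := isOpen_biUnion fun k _ => isOpen_interior
  have hBm : MeasurableSet B := S.measurableSet_biUnion fun k _ => measurableSet_cube 1 k
  have hUB : U ⊆ B := Set.biUnion_mono subset_rfl fun k _ => interior_subset
  have hBU : volume (B \ U) = 0 := by
    have hsub : B \ U ⊆ ⋃ k ∈ S, frontier (cube d 1 k) := by
      rintro x ⟨hx, hxU⟩
      simp only [hB, hU, Set.mem_iUnion] at hx hxU ⊢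
      obtain ⟨k, hk, hxk⟩ := hx
      exact ⟨k, hk, subset_closure hxk, fun h => hxU ⟨k, hk, h⟩⟩
    refine measure_mono_null hsub ((measure_biUnion_null_iff S.countable_toSet).2 fun k _ => ?_)
    exact (convex_pi fun _ _ => convex_Ico _ _).addHaar_frontier _
  have hBfin : volume B ≠ ∞ := by
    refine (measure_biUnion_lt_top S.finite_toSet fun k _ => ?_).ne
    rw [cube, Real.volume_pi_Ico]
    exact ENNReal.prod_lt_top fun _ _ => ENNReal.ofReal_lt_top
  -- Absolute continuity: `G` has small norm on every set of measure at most `δ`, in particular on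
  -- `B \ K`, because `B \ U` lies in the boundaries of the cubes and these are null.
  obtain ⟨δ, hδ, hδs⟩ := hG.eLpNorm_indicator_le hq1 hqt (half_pos hτ)
  obtain ⟨K, hKU, hK, hKδ⟩ := hUo.measurableSet.exists_isCompact_sdiff_lt
    (ne_top_of_le_ne_top hBfin (measure_mono hUB)) (ENNReal.ofReal_pos.2 hδ).ne'
  obtain ⟨v, hv, hvs, hvG⟩ := hG.exist_eLpNorm_sub_le hqt hq1 (half_pos hτ)
  obtain ⟨χ, hχ0, hχ1, hχ⟩ := exists_contMDiffMap_zero_one_of_isClosed (n := ⊤)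
    (modelWithCornersSelf ℝ (Fin d → ℝ)) hUo.isClosed_compl hK.isClosed
    (Set.disjoint_left.2 fun x hx hxK => hx (hKU hxK))
  have hχs : ContDiff ℝ (⊤ : ℕ∞) χ := χ.contMDiff.contDiff
  have hχv : ContDiff ℝ (⊤ : ℕ∞) fun x => χ x • v x := hχs.smul hvs
  have hχvc : HasCompactSupport fun x => χ x • v x := hv.mono' fun x hx => by
    refine subset_tsupport v fun h => hx ?_
    simp [h]
  refine ⟨fun x => χ x • v x, ⟨hχv, hχvc⟩, ?_, ?_⟩
  · intro k hk x hx
    have : x ∈ Uᶜ := by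
      intro hxU
      have := hUB hxU
      simp only [hB, Set.mem_iUnion] at this
      obtain ⟨l, hl, h⟩ := this
      exact hk (by rwa [mem_cube_one.1 hx, ← mem_cube_one.1 h])
    simp [hχ0 this]
  · have hdec : (G - fun x => χ x • v x) = (fun x => χ x • (G - v) x)
        + fun x => (1 - χ x) • G x := by
      ext x
      simp only [Pi.sub_apply, Pi.add_apply, smul_sub, sub_smul, one_smul]
      ring
    have hvm : AEStronglyMeasurable v volume := hvs.continuous.aestronglyMeasurable
    have hχm : AEStronglyMeasurable χ volume := hχs.continuous.aestronglyMeasurable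
    have e1 : eLpNorm (fun x => χ x • (G - v) x) q' volume ≤ ENNReal.ofReal (τ / 2) := by
      refine (eLpNorm_mono fun x => ?_).trans hvG
      rw [norm_smul, Real.norm_of_nonneg (hχ x).1]
      exact mul_le_of_le_one_left (norm_nonneg _) (hχ x).2
    have e2 : eLpNorm (fun x => (1 - χ x) • G x) q' volume ≤ ENNReal.ofReal (τ / 2) := by
      refine (eLpNorm_mono (g := (B \ K).indicator G) fun x => ?_).trans
        (hδs (B \ K) (hBm.diff hK.measurableSet) ?_)
      · by_cases hxB : x ∈ B
        · by_cases hxK : x ∈ K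
          · simp [hχ1 hxK]
          · rw [Set.indicator_of_mem (show x ∈ B \ K from ⟨hxB, hxK⟩), norm_smul,
              Real.norm_of_nonneg (sub_nonneg.2 (hχ x).2)]
            exact mul_le_of_le_one_left (norm_nonneg _) (by linarith [(hχ x).1])
        · have : G x = 0 := by
            refine hG0 (fun j => ⌊x j⌋) (fun h => hxB ?_) x (mem_cube_one.2 rfl)
            exact Set.mem_biUnion h (mem_cube_one.2 rfl)
          simp [this]
      · have : B \ K ⊆ (B \ U) ∪ (U \ K) := by
          intro x hx
          by_cases h : x ∈ U
          exacts [Or.inr ⟨h, hx.2⟩, Or.inl ⟨hx.1, h⟩]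
        calc _ ≤ _ := (measure_mono this).trans (measure_union_le _ _)
          _ ≤ _ := by rw [hBU, zero_add]; exact hKδ.le
    rw [hdec]
    refine (eLpNorm_add_le (hχm.smul (hG.1.sub hvm))
      ((aestronglyMeasurable_const.sub hχm).smul hG.1) hq1).trans ?_
    refine (add_le_add e1 e2).trans ?_
    rw [← ENNReal.ofReal_add (by positivity) (by positivity), add_halves]

/-! ### A countable dense class -/

/-- A countable family dense in `L^{q'}` over every finite union of unit cubes. -/
def countableClass (d : ℕ) (q' : ℝ≥0∞) [Fact (1 ≤ q')] [Fact (q' ≠ ∞)] :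
    Set ((Fin d → ℝ) → ℂ) :=
  Set.range fun i : Finset (Fin d → ℤ) × ℕ =>
    (⋃ k ∈ i.1, cube d 1 k).indicator
      (TopologicalSpace.denseSeq (Lp ℂ q' (volume : Measure (Fin d → ℝ))) i.2)

lemma notMem_biUnion_cube {S : Finset (Fin d → ℤ)} {k : Fin d → ℤ} (hk : k ∉ S)
    {x : Fin d → ℝ} (hx : x ∈ cube d 1 k) : x ∉ ⋃ k ∈ S, cube d 1 k := by
  simp only [Set.mem_iUnion, not_exists]
  intro l hl h
  exact hk (by rwa [mem_cube_one.1 hx, ← mem_cube_one.1 h])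

lemma measurableSet_biUnion_cube (S : Finset (Fin d → ℤ)) :
    MeasurableSet (⋃ k ∈ S, cube d 1 k) :=
  S.measurableSet_biUnion fun k _ => measurableSet_cube 1 k

lemma countable_approx_cubes [Fact (1 ≤ q')] [Fact (q' ≠ ∞)] (S : Finset (Fin d → ℤ))
    (G : (Fin d → ℝ) → ℂ) (hG : MemLp G q' volume)
    (hG0 : ∀ k ∉ S, ∀ x ∈ cube d 1 k, G x = 0) (τ : ℝ) (hτ : 0 < τ) :
    ∃ w ∈ countableClass d q', (∀ k ∉ S, ∀ x ∈ cube d 1 k, w x = 0) ∧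
        eLpNorm (G - w) q' volume ≤ ENNReal.ofReal τ := by
  obtain ⟨n, hn⟩ := (TopologicalSpace.denseRange_denseSeq
    (Lp ℂ q' (volume : Measure (Fin d → ℝ)))).exists_dist_lt hG.toLp hτ
  set u := TopologicalSpace.denseSeq (Lp ℂ q' (volume : Measure (Fin d → ℝ))) n
  set v : (Fin d → ℝ) → ℂ := fun x => u x with hv
  refine ⟨_, ⟨(S, n), rfl⟩, fun k hk x hx =>
    Set.indicator_of_notMem (notMem_biUnion_cube hk hx) _, ?_⟩
  have hdec : G - (⋃ k ∈ S, cube d 1 k).indicator v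
      = (⋃ k ∈ S, cube d 1 k).indicator (G - v) := by
    ext x
    by_cases hx : x ∈ ⋃ k ∈ S, cube d 1 k
    · simp only [Pi.sub_apply, Set.indicator_of_mem hx]
    · have : G x = 0 := by
        refine hG0 (fun j => ⌊x j⌋) (fun h => hx ?_) x (mem_cube_one.2 rfl)
        exact Set.mem_biUnion h (mem_cube_one.2 rfl)
      simp only [Pi.sub_apply, Set.indicator_of_notMem hx, this, sub_zero]
  change eLpNorm (G - (⋃ k ∈ S, cube d 1 k).indicator v) q' volume ≤ _
  rw [hdec]
  refine (eLpNorm_indicator_le _).trans ?_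
  have h1 : eLpNorm (G - v) q' volume = edist hG.toLp u := by
    rw [Lp.edist_def]
    exact eLpNorm_congr_ae (hG.coeFn_toLp.symm.sub (ae_eq_refl _))
  rw [h1, edist_dist]
  exact ENNReal.ofReal_le_ofReal hn.le

/-! ### Density in `𝓗` -/

/-- The amalgam norm dominates the norm of `𝓗`, through the one-term 𝔥-decomposition of dilation
`1`. -/
lemma hBound_of_amalgamNorm_le (hp1 : 1 ≤ p') (hpt : p' ≠ ∞) {φ : (Fin d → ℝ) → ℂ} {t : ℝ}
    (ht : 0 < t) (hφ : LocallyIntegrable φ volume)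
    (hn : amalgamNorm d q' p' 1 φ ≤ ENNReal.ofReal t) : HBound d q' p' α' φ t := by
  have := (HBound.zero (d := d) (q' := q') (α' := α') hp1 hpt).add_St hp1 hpt one_pos ht hφ hn
  rwa [St_one, zero_add, zero_add] at this

lemma le_ofReal_toReal_add_one {a : ℝ≥0∞} (h : a ≠ ∞) : a ≤ ENNReal.ofReal (a.toReal + 1) := by
  rw [← ENNReal.ofReal_toReal h]
  exact ENNReal.ofReal_le_ofReal (by rw [ENNReal.ofReal_toReal h]; linarith)

lemma contDiff_St (r : ℝ) {f : (Fin d → ℝ) → ℂ} (hf : ContDiff ℝ (⊤ : ℕ∞) f) :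
    ContDiff ℝ (⊤ : ℕ∞) (St d α' r f) := by
  have : ContDiff ℝ (⊤ : ℕ∞) fun x : Fin d → ℝ => f (r⁻¹ • x) :=
    hf.comp (contDiff_const_smul r⁻¹)
  exact contDiff_const.smul (𝕜 := ℝ) (f := fun _ => (r ^ (-(d : ℝ) * (1 / α').toReal) : ℝ)) this

lemma hasCompactSupport_St {r : ℝ} (hr : 0 < r) {f : (Fin d → ℝ) → ℂ} (hf : HasCompactSupport f) :
    HasCompactSupport (St d α' r f) := by
  refine (hf.comp_smul (inv_ne_zero hr.ne')).mono fun x hx h => hx ?_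
  change f (r⁻¹ • x) = 0 at h
  simp only [St]
  rw [h, smul_zero]

/-- Each element of `𝓗` is, up to an error of norm at most `δ`, a test function: the tail of an
𝔥-decomposition is small, and in the finitely many remaining terms the amalgam functions are
replaced by test functions. -/
lemma MemH.exists_smooth (hq1 : 1 ≤ q') (hqt : q' ≠ ∞) (hp1 : 1 ≤ p') (hpt : p' ≠ ∞)
    {f : (Fin d → ℝ) → ℂ} (hf : MemH d q' p' α' f) {δ : ℝ} (hδ : 0 < δ) :
    ∃ h : (Fin d → ℝ) → ℂ, ContDiff ℝ (⊤ : ℕ∞) h ∧ HasCompactSupport h ∧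
      MemH d q' p' α' h ∧ HBound d q' p' α' (f - h) δ := by
  obtain ⟨c, ρ, g, hd⟩ := hf
  obtain ⟨N, hN⟩ := ((tendsto_sum_nat_add fun n => ‖c n‖).eventually
    (gt_mem_nhds (half_pos hδ))).exists
  have hη : 0 < δ / 2 / (N + 1) := by positivity
  have hcg : ∀ n, LocallyIntegrable (c n • g n) volume := fun n => (hd.loc_int n).smul (c n)
  have key : ∀ n, ∃ w ∈ {w : (Fin d → ℝ) → ℂ | ContDiff ℝ (⊤ : ℕ∞) w ∧ HasCompactSupport w},
      amalgamNorm d q' p' 1 (c n • g n - w) ≤ ENNReal.ofReal (δ / 2 / (N + 1)) := by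
    intro n
    refine amalgam_approx hp1 hpt _ (smooth_approx_cubes hq1 hqt) (hcg n).aestronglyMeasurable ?_ hη
    rw [amalgamNorm_smul hp1 hpt]
    exact ENNReal.mul_ne_top enorm_ne_top (ne_top_of_le_ne_top ENNReal.one_ne_top (hd.norm_le n))
  choose ψ hψ hψn using key
  have hψL : ∀ n, LocallyIntegrable (ψ n) volume :=
    fun n => (hψ n).1.continuous.locallyIntegrable
  have hψfin : ∀ n, amalgamNorm d q' p' 1 (ψ n) ≠ ∞ := by
    intro n
    obtain ⟨S, hS⟩ := exists_finset_cubes (hψ n).2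
    exact (amalgamNorm_lt_top hp1 hpt S hS
      ((hψ n).1.continuous.memLp_of_hasCompactSupport (hψ n).2)).ne
  refine ⟨∑ n ∈ Finset.range N, St d α' (ρ n) (ψ n), ?_, ?_, ?_, ?_⟩
  · have : (∑ n ∈ Finset.range N, St d α' (ρ n) (ψ n))
        = fun x => ∑ n ∈ Finset.range N, St d α' (ρ n) (ψ n) x := by
      ext x
      exact Finset.sum_apply _ _ _
    rw [this]
    exact ContDiff.sum fun n _ => contDiff_St (ρ n) (hψ n).1
  · refine Finset.sum_induction _ HasCompactSupport (fun _ _ => HasCompactSupport.add)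
      HasCompactSupport.zero fun n _ => hasCompactSupport_St (hd.rho_pos n) (hψ n).2
  · have := (HBound.zero (d := d) (q' := q') (α' := α') hp1 hpt).add_sum_St hp1 hpt hd.rho_pos
      (t := fun n => (amalgamNorm d q' p' 1 (ψ n)).toReal + 1) (fun n => by positivity) hψL
      (fun n => le_ofReal_toReal_add_one (hψfin n)) N
    rw [zero_add] at this
    exact this.memH
  · have h1 := (hd.tail N).add_sum_St hp1 hpt hd.rho_pos (fun _ => hη)
      (fun n => (hcg n).sub (hψL n)) hψn N
    have h2 : f - ∑ n ∈ Finset.range N, St d α' (ρ n) (ψ n)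
        = f - ∑ n ∈ Finset.range N, c n • St d α' (ρ n) (g n)
          + ∑ n ∈ Finset.range N, St d α' (ρ n) (c n • g n - ψ n) := by
      simp_rw [St_sub, St_smul, Finset.sum_sub_distrib]
      abel
    rw [h2]
    obtain ⟨c', ρ', g', h3, h4⟩ := h1
    refine ⟨c', ρ', g', h3, h4.trans ?_⟩
    rw [Finset.sum_const, Finset.card_range, nsmul_eq_mul]
    have : (N : ℝ) * (δ / 2 / (N + 1)) ≤ δ / 2 := by
      rw [mul_div_assoc', div_le_iff₀ (by positivity)]
      nlinarith
    linarith

lemma conj_bounds {q q' : ℝ≥0∞} (hq : 1 < q) (h : 1 / q + 1 / q' = 1) : 1 ≤ q' ∧ q' ≠ ∞ := by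
  constructor
  · have : 1 / q' ≤ 1 := le_add_self.trans h.le
    rwa [one_div, ENNReal.inv_le_one] at this
  · rintro rfl
    rw [one_div, one_div, ENNReal.inv_top, add_zero, ENNReal.inv_eq_one] at h
    exact hq.ne' h

lemma exists_real_lt {ε : ℝ≥0∞} (hε : 0 < ε) : ∃ δ : ℝ, 0 < δ ∧ ENNReal.ofReal δ < ε := by
  obtain ⟨r, hr0, hr⟩ := ENNReal.lt_iff_exists_nnreal_btwn.1 hε
  exact ⟨r, by exact_mod_cast hr0, by simpa using hr⟩

end HDensity

/-- For `1 < q ≤ α ≤ p ≤ ∞` with `1 < p`, the compactly supported smooth functions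
form a dense subspace of `𝓗(q,p,α)`; consequently `𝓗(q,p,α)` is separable. -/
theorem H_smooth_dense_separable
    (d : ℕ) (hd : 1 ≤ d) (q p α q' p' α' : ℝ≥0∞)
    (hq : 1 < q) (hqα : q ≤ α) (hαp : α ≤ p) (hp : 1 < p)
    (hqq' : 1 / q + 1 / q' = 1) (hpp' : 1 / p + 1 / p' = 1) (hαα' : 1 / α + 1 / α' = 1) :
    -- density of compactly supported smooth functions
    (∀ f : (Fin d → ℝ) → ℂ, MemH d q' p' α' f → ∀ ε : ℝ≥0∞, 0 < ε →
      ∃ h : (Fin d → ℝ) → ℂ, ContDiff ℝ (⊤ : ℕ∞) h ∧ HasCompactSupport h ∧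
        MemH d q' p' α' h ∧ MemH d q' p' α' (f - h) ∧ HNorm d q' p' α' (f - h) < ε) ∧
    -- separability
    ∃ D : Set ((Fin d → ℝ) → ℂ), D.Countable ∧ (∀ h ∈ D, MemH d q' p' α' h) ∧
      ∀ f : (Fin d → ℝ) → ℂ, MemH d q' p' α' f → ∀ ε : ℝ≥0∞, 0 < ε →
        ∃ h ∈ D, MemH d q' p' α' (f - h) ∧ HNorm d q' p' α' (f - h) < ε := by
  obtain ⟨hq1, hqt⟩ := conj_bounds hq hqq'
  obtain ⟨hp1, hpt⟩ := conj_bounds hp hpp'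
  constructor
  · intro f hf ε hε
    obtain ⟨δ, hδ, hδε⟩ := exists_real_lt hε
    obtain ⟨h, h1, h2, h3, h4⟩ := hf.exists_smooth hq1 hqt hp1 hpt hδ
    exact ⟨h, h1, h2, h3, h4.memH, h4.hNorm_le.trans_lt hδε⟩
  · have : Fact (1 ≤ q') := ⟨hq1⟩
    have : Fact (q' ≠ ∞) := ⟨hqt⟩
    have hD : ∀ w ∈ countableClass d q', LocallyIntegrable w volume ∧
        amalgamNorm d q' p' 1 w ≠ ∞ := by
      rintro _ ⟨⟨S, n⟩, rfl⟩
      have hmem := (Lp.memLp (TopologicalSpace.denseSeq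
        (Lp ℂ q' (volume : Measure (Fin d → ℝ))) n)).indicator (measurableSet_biUnion_cube S)
      exact ⟨hmem.locallyIntegrable hq1, (amalgamNorm_lt_top hp1 hpt S (fun k hk x hx =>
        Set.indicator_of_notMem (notMem_biUnion_cube hk hx) _) hmem).ne⟩
    refine ⟨countableClass d q', Set.countable_range _, fun w hw => ?_, fun f hf ε hε => ?_⟩
    · exact (hBound_of_amalgamNorm_le hp1 hpt (by positivity) (hD w hw).1
        (le_ofReal_toReal_add_one (hD w hw).2)).memH
    · obtain ⟨δ, hδ, hδε⟩ := exists_real_lt hε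
      obtain ⟨h, h1, h2, -, h4⟩ := hf.exists_smooth hq1 hqt hp1 hpt (half_pos hδ)
      have hL := h1.continuous.locallyIntegrable (μ := (volume : Measure (Fin d → ℝ)))
      obtain ⟨S, hS⟩ := exists_finset_cubes h2
      have hfin := amalgamNorm_lt_top (q' := q') hp1 hpt S hS
        (h1.continuous.memLp_of_hasCompactSupport h2)
      obtain ⟨w, hw, hwn⟩ := amalgam_approx hp1 hpt _ countable_approx_cubes
        hL.aestronglyMeasurable hfin.ne (half_pos hδ)
      -- `h - w` is small in the amalgam norm itself, so it is one further term with dilation `1`.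
      have h5 := h4.add_St hp1 hpt one_pos (half_pos hδ) (hL.sub (hD w hw).1) hwn
      rw [St_one, sub_add_sub_cancel, add_halves] at h5
      exact ⟨w, hw, h5.memH, h5.hNorm_le.trans_lt hδε⟩
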